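/- For every integer k ≥ 1, every graph with average degree at least 4k either contains the complete graph K_k as a minor, or contains a minor with n vertices and minimum degree δ satisfying δ ≥ 0.6518·n and k ≤ δ < n ≤ 4k. -/

import Mathlib

/-!
The argument is Mader's, with a threshold on the number of edges that is convex rather than linear.

Fix a function `f` and consider the minors of a graph that have at least `f n` edges, `n` being
the number of their vertices. A minimal one has exactly `f n` edges, so some vertex `v` has degree
at most `2 * f n / n`. Contracting an edge `uv` loses one edge plus one for each common neighbour
of `u` and `v` (`exists_contraction`), so by minimality each edge lies in at least
`f n - f (n - 1)` triangles. The graph induced on the neighbourhood of `v` therefore has at most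
`2 * f n / n` vertices and minimum degree at least `f n - f (n - 1)`
(`exists_dense_neighborhood`).

This is used twice. With `f n = 2 * k * n - 1` it produces a minor with fewer than `4 * k` vertices
and minimum degree at least `2 * k`, which is a ratio of about `1 / 2`. That minor has at least
`k * n` edges, enough for a second pass with `f = edgeThreshold k`, which is linear with slope `k`
up to `n = 2 * k` and grows by `k + ⌈(n - 2 * k) / 4⌉` at each later `n`. Either the second pass
descends to `k` vertices, where the threshold equals `k.choose 2` and the minor is `K_k`, or it
stops earlier; then the minimum degree is at least `k`, and at least `2 / 3 > 0.6518` of the number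
of vertices, because `4 * f n ≤ 3 * n * (f n - f (n - 1))` (`four_mul_edgeThreshold_le`).
-/

open SimpleGraph

/-- `H` is a minor of `G`: there is a family of nonempty, connected,
pairwise disjoint branch sets in `G`, one for each vertex of `H`, with an
edge of `G` between the branch sets of any two adjacent vertices of `H`. -/
def HasMinor {V : Type*} {W : Type*} (G : SimpleGraph V) (H : SimpleGraph W) : Prop :=
  ∃ φ : W → Set V,
    (∀ w, (φ w).Nonempty) ∧
    (∀ w, (G.induce (φ w)).Connected) ∧
    (Pairwise fun w w' => Disjoint (φ w) (φ w')) ∧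
    (∀ ⦃w w'⦄, H.Adj w w' → ∃ u ∈ φ w, ∃ v ∈ φ w', G.Adj u v)

/-- The average degree `2|E(G)|/|V(G)|` of a graph. -/
noncomputable def avgDeg {V : Type*} (G : SimpleGraph V) : ℝ :=
  2 * Nat.card G.edgeSet / Nat.card V

/-- `f(H)`: the infimum of all `D` such that every (finite) graph with average
degree at least `D` contains `H` as a minor. -/
noncomputable def minorF {W : Type*} (H : SimpleGraph W) : ℝ :=
  sInf {D : ℝ | ∀ (V : Type) [Fintype V], ∀ G : SimpleGraph V, D ≤ avgDeg G → HasMinor G H}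


/-! ### Minors and contractions -/

/-- The minor relation is transitive: the branch set of `x` in `G` is the union of the branch sets
in `G` of the vertices in the branch set of `x` in `H`. -/
theorem HasMinor.trans' {V W X : Type*} {G : SimpleGraph V} {H : SimpleGraph W}
    {K : SimpleGraph X} (h₁ : HasMinor G H) (h₂ : HasMinor H K) : HasMinor G K := by
  obtain ⟨φ, hφn, hφc, hφd, hφa⟩ := h₁
  obtain ⟨ψ, hψn, hψc, hψd, hψa⟩ := h₂
  refine ⟨fun x => ⋃ w ∈ ψ x, φ w, fun x => ?_, fun x => ?_, fun x y hxy => ?_, fun x y hxy => ?_⟩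
  · obtain ⟨w, hw⟩ := hψn x
    obtain ⟨v, hv⟩ := hφn w
    exact ⟨v, Set.mem_biUnion hw hv⟩
  · have hsub : ∀ w ∈ ψ x, φ w ⊆ ⋃ w ∈ ψ x, φ w := fun w hw => Set.subset_biUnion_of_mem hw
    have key : ∀ w w' : ψ x, (H.induce (ψ x)).Reachable w w' → ∀ a (ha : a ∈ φ w) b
        (hb : b ∈ φ w'), (G.induce (⋃ w ∈ ψ x, φ w)).Reachable
          ⟨a, hsub w w.2 ha⟩ ⟨b, hsub w' w'.2 hb⟩ := by
      intro w w' hr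
      rw [SimpleGraph.reachable_iff_reflTransGen] at hr
      have inside : ∀ w : ψ x, ∀ a (ha : a ∈ φ w) b (hb : b ∈ φ w),
          (G.induce (⋃ w ∈ ψ x, φ w)).Reachable ⟨a, hsub w w.2 ha⟩ ⟨b, hsub w w.2 hb⟩ :=
        fun w a ha b hb => (((hφc w).preconnected ⟨a, ha⟩ ⟨b, hb⟩)).map
          (SimpleGraph.induceHomOfLE G (hsub w w.2)).toHom
      induction hr with
      | refl => exact inside w
      | @tail y z _ hyz ih =>
        intro a ha b hb
        obtain ⟨p, hp, q, hq, hpq⟩ := hφa (show H.Adj y z from hyz)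
        refine (ih a ha p hp).trans (SimpleGraph.Reachable.trans ?_ (inside z q hq b hb))
        exact SimpleGraph.Adj.reachable (by simpa using hpq)
    obtain ⟨w, hw⟩ := hψn x
    obtain ⟨v, hv⟩ := hφn w
    rw [SimpleGraph.connected_iff_exists_forall_reachable]
    refine ⟨⟨v, hsub w hw hv⟩, ?_⟩
    rintro ⟨b, hb⟩
    obtain ⟨w', hw', hb'⟩ := Set.mem_iUnion₂.1 hb
    exact key ⟨w, hw⟩ ⟨w', hw'⟩ ((hψc x).preconnected _ _) v hv b hb'
  · simp only [Set.disjoint_iUnion_left, Set.disjoint_iUnion_right]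
    intro w' hw' w hw
    apply hφd
    rintro rfl
    exact Set.disjoint_left.1 (hψd hxy) (by assumption) (by assumption)
  · obtain ⟨w, hw, w', hw', hadj⟩ := hψa hxy
    obtain ⟨u, hu, v, hv, huv⟩ := hφa hadj
    exact ⟨u, Set.mem_biUnion hw hu, v, Set.mem_biUnion hw' hv, huv⟩

theorem hasMinor_of_injective {V W : Type*} {G : SimpleGraph V} {H : SimpleGraph W}
    (f : W → V) (hf : Function.Injective f) (h : ∀ a b, H.Adj a b → G.Adj (f a) (f b)) :
    HasMinor G H := by
  refine ⟨fun w => {f w}, fun w => Set.singleton_nonempty _, fun w => ?_, fun a b hab => ?_,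
    fun a b hab => ⟨_, rfl, _, rfl, h a b hab⟩⟩
  · have : Subsingleton ({f w} : Set V) := inferInstance
    exact { preconnected := SimpleGraph.Preconnected.of_subsingleton, nonempty := ⟨⟨f w, rfl⟩⟩ }
  · simpa using fun e => hab (hf e)

/-- Contracting the edge `uv` onto `u` loses that edge, and one edge for each triangle through
it. -/
theorem exists_contraction {V : Type} [Finite V] (G : SimpleGraph V) {u v : V} (huv : G.Adj u v) :
    ∃ H : SimpleGraph ({v}ᶜ : Set V), HasMinor G H ∧
      G.edgeSet.ncard ≤ H.edgeSet.ncard + 1 + (G.commonNeighbors u v).ncard := by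
  classical
  let H : SimpleGraph ({v}ᶜ : Set V) :=
    { Adj := fun a b => a ≠ b ∧
        (G.Adj a b ∨ (a.1 = u ∧ G.Adj v b) ∨ (b.1 = u ∧ G.Adj v a))
      symm := ⟨fun a b h => ⟨h.1.symm, by
        rcases h.2 with h | h | h
        · exact Or.inl h.symm
        · exact Or.inr (Or.inr h)
        · exact Or.inr (Or.inl h)⟩⟩
      loopless := ⟨fun a h => h.1 rfl⟩ }
  refine ⟨H, ⟨fun w => if w.1 = u then {u, v} else {w.1}, fun w => ?_, fun w => ?_,
    fun a b hab => ?_, fun a b hab => ?_⟩, ?_⟩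
  · dsimp only; split_ifs <;> simp
  · dsimp only
    by_cases hw : w.1 = u
    · rw [if_pos hw]
      exact SimpleGraph.induce_pair_connected_of_adj huv
    · rw [if_neg hw]
      have : Subsingleton ({w.1} : Set V) := inferInstance
      exact { preconnected := SimpleGraph.Preconnected.of_subsingleton, nonempty := ⟨⟨w, rfl⟩⟩ }
  · have h1 : a.1 ≠ b.1 := fun h => hab (Subtype.ext h)
    have h2 : a.1 ≠ v := a.2
    have h3 : b.1 ≠ v := b.2
    dsimp only
    split_ifs with ha hb hb
    · exact absurd (ha.trans hb.symm) h1
    · rw [Set.disjoint_singleton_right]; simp [hb, h3]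
    · rw [Set.disjoint_singleton_left]; simp [ha, h2]
    · simpa using h1
  · have hmem : ∀ w : ({v}ᶜ : Set V), w.1 ∈ (if w.1 = u then {u, v} else {w.1} : Set V) := by
      intro w
      split_ifs with h <;> simp [h]
    rcases hab.2 with h | ⟨h, h'⟩ | ⟨h, h'⟩
    · exact ⟨a, hmem a, b, hmem b, h⟩
    · exact ⟨v, by simp [h], b, hmem b, h'⟩
    · exact ⟨a, hmem a, v, by simp [h], h'.symm⟩
  · -- `X` consists of the neighbours of `v` whose edge to `v` is turned into a new edge at `u`.
    set X : Set V := (G.neighborSet v \ G.neighborSet u) \ {u} with hX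
    have hinjv : Function.Injective (fun b : V => s(v, b)) := fun a b h => Sym2.congr_right.1 h
    have hinju : Function.Injective (fun b : V => s(u, b)) := fun a b h => Sym2.congr_right.1 h
    have hN : (G.neighborSet v).ncard ≤ X.ncard + (G.commonNeighbors u v).ncard + 1 := by
      have hsub : G.neighborSet v ⊆ X ∪ G.commonNeighbors u v ∪ {u} := by
        intro b hb
        simp only [hX, Set.mem_union, Set.mem_sdiff, Set.mem_singleton_iff,
          SimpleGraph.mem_commonNeighbors, SimpleGraph.mem_neighborSet] at hb ⊢
        tauto
      refine (Set.ncard_le_ncard hsub).trans ((Set.ncard_union_le _ _).trans ?_)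
      rw [Set.ncard_singleton]
      gcongr
      exact Set.ncard_union_le _ _
    have hinjH : (Sym2.map Subtype.val '' H.edgeSet).ncard = H.edgeSet.ncard :=
      Set.ncard_image_of_injective _ (Sym2.map.injective Subtype.val_injective)
    have hXsub : (fun b => s(u, b)) '' X ⊆ Sym2.map Subtype.val '' H.edgeSet := by
      rintro _ ⟨b, hb, rfl⟩
      obtain ⟨⟨hb1, hb2⟩, hb3⟩ := hb
      have hvb : G.Adj v b := hb1
      refine ⟨s(⟨u, huv.ne⟩, ⟨b, hvb.ne'⟩), ?_, rfl⟩
      refine ⟨fun h => hb3 (Subtype.ext_iff.1 h).symm, Or.inr (Or.inl ⟨rfl, hvb⟩)⟩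
    have hE : G.edgeSet ⊆ (Sym2.map Subtype.val '' H.edgeSet) \ ((fun b => s(u, b)) '' X) ∪
        (fun b => s(v, b)) '' G.neighborSet v := by
      intro e
      induction e using Sym2.ind with
      | _ a b =>
      intro hab
      have hab' : G.Adj a b := hab
      by_cases ha : a = v
      · subst ha
        exact Or.inr ⟨b, hab', rfl⟩
      by_cases hb : b = v
      · subst hb
        exact Or.inr ⟨a, hab'.symm, Sym2.eq_swap⟩
      refine Or.inl ⟨⟨s(⟨a, ha⟩, ⟨b, hb⟩), ⟨fun h => hab'.ne (Subtype.ext_iff.1 h), Or.inl hab'⟩,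
        rfl⟩, ?_⟩
      rintro ⟨c, hc, hce⟩
      have huc : G.Adj u c := by
        rw [← SimpleGraph.mem_edgeSet]
        have : s(u, c) = s(a, b) := hce
        rw [this]
        exact hab
      exact hc.1.2 huc
    have h1 := (Set.ncard_le_ncard hE).trans (Set.ncard_union_le _ _)
    rw [Set.ncard_image_of_injective _ hinjv] at h1
    have h2 := Set.ncard_sdiff_add_ncard_of_subset hXsub
    rw [Set.ncard_image_of_injective _ hinju, hinjH] at h2
    omega

/-! ### Dense neighbourhoods in critical minors -/

theorem sum_ncard_neighborSet {V : Type} [Fintype V] (G : SimpleGraph V) :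
    ∑ v, (G.neighborSet v).ncard = 2 * G.edgeSet.ncard := by
  classical
  rw [← SimpleGraph.coe_edgeFinset, Set.ncard_coe_finset, ← G.sum_degrees_eq_twice_card_edges]
  refine Finset.sum_congr rfl fun v _ => ?_
  rw [← SimpleGraph.card_neighborFinset_eq_degree, ← Set.ncard_coe_finset,
    SimpleGraph.coe_neighborFinset]

/-- A density-critical minor yields a dense neighbourhood. Among the minors of `G` with `n ≥ n₁`
vertices and at least `f n` edges choose one that is minimal. Unless it has only `n₁` vertices, it
has exactly `f n` edges, no isolated vertex, and each edge lies in at least `f n - f (n - 1)`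
triangles; `K` is the graph induced on the neighbourhood of a vertex of minimum degree. -/
theorem exists_dense_neighborhood (f : ℕ → ℕ) (n₁ : ℕ) (h0 : 1 ≤ n₁)
    (hf : ∀ n, n₁ ≤ n → f n ≤ f (n + 1)) :
    ∀ (N : ℕ) (V : Type) [Fintype V] (G : SimpleGraph V), Fintype.card V = N → n₁ ≤ N →
      f N ≤ G.edgeSet.ncard →
      (∃ (W : Type) (_ : Fintype W) (H : SimpleGraph W), HasMinor G H ∧ Fintype.card W = n₁ ∧
        f n₁ ≤ H.edgeSet.ncard) ∨
      ∃ (n d : ℕ) (K : SimpleGraph (Fin d)), HasMinor G K ∧ n₁ < n ∧ n ≤ N ∧ 1 ≤ d ∧ d ≤ n ∧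
        d * n ≤ 2 * f n ∧ ∀ x, f n ≤ f (n - 1) + (K.neighborSet x).ncard := by
  classical
  intro N
  induction N with
  | zero => intro V _ G _ h; omega
  | succ N ih =>
    intro V _ G hV hn hG
    rcases Nat.eq_or_lt_of_le hn with hn' | hn'
    · exact Or.inl ⟨V, inferInstance, G, hasMinor_of_injective id Function.injective_id
        (fun _ _ h => h), by omega, by rw [hn']; exact hG⟩
    -- By induction the claim holds as soon as the class has a member on one vertex fewer.
    by_contra hcon
    have descend : ∀ (v : V) (H : SimpleGraph ({v}ᶜ : Set V)), HasMinor G H →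
        f N ≤ H.edgeSet.ncard → False := fun v H hm he => hcon <| by
      have hc : Fintype.card ({v}ᶜ : Set V) = N := by
        rw [Fintype.card_compl_set]; simp [hV]
      rcases ih _ H hc (by omega) he with ⟨W, i, K, hK, h⟩ | ⟨n, d, K, hK, h1, h2, h⟩
      · exact Or.inl ⟨W, i, K, hm.trans' hK, h⟩
      · exact Or.inr ⟨n, d, K, hm.trans' hK, h1, h2.trans (Nat.le_succ N), h⟩
    -- Delete surplus edges, so that the edge count, and with it the minimum degree, is controlled.
    obtain ⟨G', hle, hG'⟩ : ∃ G' : SimpleGraph V, G' ≤ G ∧ G'.edgeSet.ncard = f (N + 1) := by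
      obtain ⟨s, hs, hsc⟩ := Set.exists_subset_card_eq hG
      refine ⟨SimpleGraph.fromEdgeSet s, ?_, ?_⟩
      · rw [SimpleGraph.fromEdgeSet_le]
        exact Set.sdiff_subset.trans hs
      · rw [← hsc, (SimpleGraph.edgeSet_eq_iff (G := SimpleGraph.fromEdgeSet s) (s := s)).2
          ⟨rfl, ?_⟩]
        rw [Set.disjoint_left]
        intro e he hd
        exact SimpleGraph.not_isDiag_of_mem_edgeSet G (hs he) hd
    have hGG' : HasMinor G G' := hasMinor_of_injective id Function.injective_id
      (fun _ _ h => hle h)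
    have hfN := hf N (by omega)
    by_cases hedge : ∀ u v, G'.Adj u v → f (N + 1) ≤ f N + (G'.commonNeighbors u v).ncard
    swap
    · push Not at hedge
      obtain ⟨u, v, huv, ht⟩ := hedge
      obtain ⟨H, hH, hcard⟩ := exists_contraction G' huv
      exact descend v H (hGG'.trans' hH) (by omega)
    by_cases hiso : ∃ v, G'.neighborSet v = ∅
    · obtain ⟨v, hv⟩ := hiso
      refine descend v (G'.induce {v}ᶜ) (hGG'.trans' (hasMinor_of_injective Subtype.val
        Subtype.val_injective fun _ _ h => h)) ?_
      have hsub : G'.edgeSet ⊆ Sym2.map Subtype.val '' (G'.induce ({v}ᶜ : Set V)).edgeSet := by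
        intro e
        induction e using Sym2.ind with
        | _ a b =>
        intro hab
        have hab' : G'.Adj a b := hab
        refine ⟨s(⟨a, ?_⟩, ⟨b, ?_⟩), hab', rfl⟩
        · rintro rfl
          exact (hv ▸ hab' : b ∈ (∅ : Set V))
        · rintro rfl
          exact (hv ▸ hab'.symm : a ∈ (∅ : Set V))
      have := (Set.ncard_le_ncard hsub).trans (Set.ncard_image_le (Set.toFinite _))
      omega
    refine hcon (Or.inr ?_)
    have : Nonempty V := Fintype.card_pos_iff.1 (by omega)
    obtain ⟨v, hv⟩ := Finite.exists_min (fun v => (G'.neighborSet v).ncard)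
    have e : Fin (G'.neighborSet v).ncard ≃ G'.neighborSet v :=
      (Finite.equivFinOfCardEq (Nat.card_coe_set_eq _)).symm
    have hval : Function.Injective fun x => (e x).1 := Subtype.val_injective.comp e.injective
    refine ⟨N + 1, (G'.neighborSet v).ncard, G'.comap fun x => (e x).1,
      hGG'.trans' (hasMinor_of_injective _ hval fun _ _ h => h), hn', le_rfl, ?_, ?_, ?_, ?_⟩
    · exact (Set.ncard_pos).2 (Set.nonempty_iff_ne_empty.2 fun h => hiso ⟨v, h⟩)
    · rw [← hV, ← Nat.card_eq_fintype_card]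
      exact Set.ncard_le_card _
    · rw [← hG', ← sum_ncard_neighborSet, ← hV, mul_comm]
      simpa using Finset.card_nsmul_le_sum Finset.univ (fun v => (G'.neighborSet v).ncard) _
        (fun w _ => hv w)
    · intro x
      refine (hedge v (e x) (e x).2).trans ?_
      simp only [Nat.add_sub_cancel]
      gcongr
      rw [← Set.ncard_image_of_injective _ hval]
      refine Set.ncard_le_ncard ?_
      rintro b ⟨hb1, hb2⟩
      refine ⟨e.symm ⟨b, hb1⟩, ?_, by simp⟩
      simpa using hb2

/-! ### The edge threshold -/

/-- The sum of `⌈i / 4⌉` over `1 ≤ i ≤ m`, in closed form: for `m = 4 * q + r` with `r < 4` it is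
`(q + 1) * (2 * q + r)`. -/
def ceilSum (m : ℕ) : ℕ := (m / 4 + 1) * (m - 2 * (m / 4))

theorem ceilSum_succ (m : ℕ) : ceilSum (m + 1) = ceilSum m + (m / 4 + 1) := by
  unfold ceilSum
  obtain ⟨q, r, hr, rfl⟩ : ∃ q r, r < 4 ∧ m = 4 * q + r :=
    ⟨m / 4, m % 4, Nat.mod_lt _ (by norm_num), (Nat.div_add_mod m 4).symm⟩
  rcases Nat.lt_or_ge r 3 with h | h
  · rw [show (4 * q + r + 1) / 4 = q by omega, show (4 * q + r) / 4 = q by omega,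
      show 4 * q + r + 1 - 2 * q = (4 * q + r - 2 * q) + 1 by omega]
    ring
  · obtain rfl : r = 3 := by omega
    rw [show (4 * q + 3 + 1) / 4 = q + 1 by omega, show (4 * q + 3) / 4 = q by omega,
      show 4 * q + 3 + 1 - 2 * (q + 1) = 2 * q + 2 by omega,
      show 4 * q + 3 - 2 * q = 2 * q + 3 by omega]
    ring

/-- The edge threshold for graphs on `n ≥ k` vertices. It is chosen so that, for `k ≥ 1`, the
only graph on `k` vertices that meets it is `K_k`, its increments are at least `k`, and the
increment at `n > k` is at least `2 / 3` of the average degree `2 * edgeThreshold k n / n`. The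
subtraction `n - 2 * k` is deliberately truncated: the threshold is linear up to `n = 2 * k`. -/
def edgeThreshold (k n : ℕ) : ℕ := k * n - k * (k + 1) / 2 + ceilSum (n - 2 * k)

theorem two_mul_edgeThreshold {k n : ℕ} (h : k ≤ n) :
    2 * edgeThreshold k n + k * (k + 1) = 2 * (k * n) + 2 * ceilSum (n - 2 * k) := by
  unfold edgeThreshold
  have h1 : 2 * (k * (k + 1) / 2) = k * (k + 1) := Nat.mul_div_cancel' k.even_mul_succ_self.two_dvd
  have h2 : k * (k + 1) ≤ 2 * (k * n) := by
    rcases Nat.eq_zero_or_pos k with rfl | hk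
    · simp
    · nlinarith
  omega

theorem edgeThreshold_succ {k n : ℕ} (h : k ≤ n) :
    edgeThreshold k (n + 1) =
      edgeThreshold k n + k + (if n < 2 * k then 0 else (n - 2 * k) / 4 + 1) := by
  have h1 := two_mul_edgeThreshold h
  have h2 := two_mul_edgeThreshold (show k ≤ n + 1 by omega)
  rw [Nat.mul_succ k n] at h2
  split_ifs with hn
  · rw [show n + 1 - 2 * k = 0 by omega] at h2
    rw [show n - 2 * k = 0 by omega] at h1
    omega
  · rw [show n + 1 - 2 * k = (n - 2 * k) + 1 by omega, ceilSum_succ] at h2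
    omega

theorem edgeThreshold_self {k : ℕ} (hk : 1 ≤ k) : edgeThreshold k k = k.choose 2 := by
  have h1 := two_mul_edgeThreshold (le_refl k)
  have h2 : 2 * (k * (k - 1) / 2) = k * (k - 1) :=
    Nat.mul_div_cancel' (Nat.even_mul_pred_self k).two_dvd
  rw [Nat.choose_two_right]
  rw [show k - 2 * k = 0 by omega, show ceilSum 0 = 0 from rfl] at h1
  obtain ⟨j, rfl⟩ : ∃ j, k = j + 1 := ⟨k - 1, by omega⟩
  simp only [Nat.add_sub_cancel] at *
  nlinarith

/-- A graph on `n < 4 * k` vertices with average degree at least `2 * k` meets the threshold. -/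
theorem edgeThreshold_le {k n : ℕ} (h : k ≤ n) (h4 : n < 4 * k) : edgeThreshold k n ≤ k * n := by
  have h1 := two_mul_edgeThreshold h
  suffices 2 * ceilSum (n - 2 * k) ≤ k * (k + 1) by omega
  have hm : n - 2 * k + 1 ≤ 2 * k := by omega
  generalize n - 2 * k = m at hm
  unfold ceilSum
  obtain ⟨q, r, hr, rfl⟩ : ∃ q r, r < 4 ∧ m = 4 * q + r :=
    ⟨m / 4, m % 4, Nat.mod_lt _ (by norm_num), (Nat.div_add_mod m 4).symm⟩
  rw [show (4 * q + r) / 4 = q by omega, show 4 * q + r - 2 * q = 2 * q + r by omega]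
  interval_cases r
  · have : 2 * q + 1 ≤ k := by omega
    nlinarith
  · have : 2 * q + 1 ≤ k := by omega
    nlinarith
  · have : 2 * q + 2 ≤ k := by omega
    nlinarith
  · have : 2 * q + 2 ≤ k := by omega
    nlinarith

/-- The increment of the threshold at `n` is at least `2 / 3` of the average degree of a graph with
`n` vertices and `edgeThreshold k n` edges. -/
theorem four_mul_edgeThreshold_le {k n : ℕ} (hk : 1 ≤ k) (h : k < n) :
    4 * edgeThreshold k n ≤ 3 * (n * (edgeThreshold k n - edgeThreshold k (n - 1))) := by
  obtain ⟨n, rfl⟩ : ∃ j, n = j + 1 := ⟨n - 1, by omega⟩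
  have h1 := two_mul_edgeThreshold (show k ≤ n + 1 by omega)
  have h2 := edgeThreshold_succ (show k ≤ n by omega)
  rw [Nat.add_sub_cancel]
  split_ifs at h2 with hn
  · rw [show edgeThreshold k (n + 1) - edgeThreshold k n = k by omega]
    rw [show n + 1 - 2 * k = 0 by omega, show ceilSum 0 = 0 from rfl] at h1
    nlinarith
  · obtain ⟨q, r, hr, hm⟩ : ∃ q r, r < 4 ∧ n - 2 * k = 4 * q + r :=
      ⟨(n - 2 * k) / 4, (n - 2 * k) % 4, Nat.mod_lt _ (by norm_num), (Nat.div_add_mod _ 4).symm⟩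
    rw [show edgeThreshold k (n + 1) - edgeThreshold k n = k + q + 1 by omega]
    rw [show n + 1 - 2 * k = (n - 2 * k) + 1 by omega, ceilSum_succ, hm] at h1
    unfold ceilSum at h1
    rw [show (4 * q + r) / 4 = q by omega, show 4 * q + r - 2 * q = 2 * q + r by omega] at h1
    obtain rfl : n = 2 * k + 4 * q + r := by omega
    have hr' : r ≤ 3 := by omega
    have hrk : r * (k + q) ≤ 3 * (k + q) := Nat.mul_le_mul_right _ hr'
    nlinarith [Nat.zero_le (k * q), Nat.zero_le (q * q)]

/-! ### Minimum degree and complete minors -/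

theorem hasMinor_completeGraph {W : Type} [Fintype W] (H : SimpleGraph W) {k : ℕ}
    (hc : Fintype.card W = k) (he : k.choose 2 ≤ H.edgeSet.ncard) :
    HasMinor H (completeGraph (Fin k)) := by
  classical
  have htop : H = ⊤ := by
    rw [← SimpleGraph.edgeFinset_inj]
    refine Finset.eq_of_subset_of_card_le (SimpleGraph.edgeFinset_mono le_top) ?_
    rw [SimpleGraph.card_edgeFinset_top_eq_card_choose_two, hc, ← Set.ncard_coe_finset,
      SimpleGraph.coe_edgeFinset]
    exact he
  subst htop
  have e : Fin k ≃ W := (Fintype.equivFinOfCardEq hc).symm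
  exact hasMinor_of_injective e e.injective fun a b h => by simpa using h

/-- For every integer `k ≥ 1`, every graph with average degree at least
`4k` either contains `K_k` as a minor, or contains a minor with `n` vertices and
minimum degree `δ` satisfying `δ ≥ 0.6518·n` and `k ≤ δ < n ≤ 4k`. -/
theorem statement6 (k : ℕ) (hk : 1 ≤ k) (V : Type) [Fintype V] (G : SimpleGraph V)
    (hG : (4 * k : ℝ) ≤ avgDeg G) :
    HasMinor G (completeGraph (Fin k)) ∨
    ∃ (n δ : ℕ) (H : SimpleGraph (Fin n)),
      HasMinor G H ∧
      (∀ v, δ ≤ Nat.card (H.neighborSet v)) ∧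
      (∃ v, Nat.card (H.neighborSet v) = δ) ∧
      0.6518 * n ≤ (δ : ℝ) ∧ k ≤ δ ∧ δ < n ∧ n ≤ 4 * k := by
  have hcard : 0 < Nat.card V := by
    rcases Nat.eq_zero_or_pos (Nat.card V) with h | h
    · have hk' : (1 : ℝ) ≤ k := by exact_mod_cast hk
      simp only [avgDeg, h, Nat.cast_zero, div_zero] at hG
      linarith
    · exact h
  have hE : 2 * k * Fintype.card V ≤ G.edgeSet.ncard := by
    rw [avgDeg, le_div_iff₀ (by exact_mod_cast hcard)] at hG
    rw [← Nat.card_eq_fintype_card, ← Nat.card_coe_set_eq]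
    have : 4 * k * Nat.card V ≤ 2 * Nat.card G.edgeSet := by exact_mod_cast hG
    linarith
  rw [Nat.card_eq_fintype_card] at hcard
  -- The `- 1` in the threshold forces a vertex of degree strictly below `4 * k`.
  rcases exists_dense_neighborhood (fun n => 2 * k * n - 1) 1 le_rfl
    (fun n _ => Nat.sub_le_sub_right (Nat.mul_le_mul_left _ n.le_succ) 1)
    _ V G rfl hcard ((Nat.sub_le _ _).trans hE) with
    ⟨W, _, H, -, hW, hH⟩ | ⟨n, d, K, hK, hn1, -, hd1, -, hdn, hdeg⟩
  · -- A graph on one vertex has no edges, hence lies below the threshold.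
    exfalso
    have hempty : H.edgeSet = ∅ := by
      have : Subsingleton W := Fintype.card_le_one_iff_subsingleton.1 hW.le
      rw [Subsingleton.elim H ⊥, SimpleGraph.edgeSet_bot]
    rw [hempty, Set.ncard_empty] at hH
    omega
  have hmindeg : ∀ x, 2 * k ≤ (K.neighborSet x).ncard := by
    intro x
    have h := hdeg x
    obtain ⟨m, rfl⟩ : ∃ m, n = m + 2 := ⟨n - 2, by omega⟩
    rw [show m + 2 - 1 = m + 1 by omega, show 2 * k * (m + 2) = 2 * k * (m + 1) + 2 * k by ring]
      at h
    have : 1 ≤ 2 * k * (m + 1) := Nat.mul_pos (by omega) (by omega)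
    omega
  have hd4 : d < 4 * k := by
    by_contra hcon
    have h1 : 4 * k * n ≤ d * n := Nat.mul_le_mul_right _ (by omega)
    have h2 : 1 ≤ 2 * k * n := Nat.mul_pos (by omega) (by omega)
    have h3 : 4 * k * n = 2 * (2 * k * n) := by ring
    omega
  have hdk : k ≤ d := by
    have h1 := hmindeg ⟨0, hd1⟩
    have h2 := Set.ncard_le_card (K.neighborSet ⟨0, hd1⟩)
    simp only [Nat.card_eq_fintype_card, Fintype.card_fin] at h2
    omega
  have hKE : edgeThreshold k d ≤ K.edgeSet.ncard := by
    refine (edgeThreshold_le hdk hd4).trans ?_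
    have h1 := Finset.card_nsmul_le_sum Finset.univ (fun v => (K.neighborSet v).ncard) _
      (fun w _ => hmindeg w)
    rw [sum_ncard_neighborSet] at h1
    simp only [Finset.card_univ, Fintype.card_fin, smul_eq_mul] at h1
    linarith
  rcases exists_dense_neighborhood (edgeThreshold k) k hk
    (fun n hn => by rw [edgeThreshold_succ hn]; omega)
    d (Fin d) K (Fintype.card_fin d) hdk hKE with
    ⟨W, _, H, hH, hW, hHE⟩ | ⟨n', m, L, hL, hn', hn'd, hm1, hmn', hmn, hLdeg⟩
  · left
    rw [edgeThreshold_self hk] at hHE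
    exact (hK.trans' hH).trans' (hasMinor_completeGraph H hW hHE)
  right
  have : Nonempty (Fin m) := ⟨⟨0, hm1⟩⟩
  obtain ⟨x, hx⟩ := Finite.exists_min (fun x => (L.neighborSet x).ncard)
  have hlt : (L.neighborSet x).ncard < m := by
    have h : (L.neighborSet x) ⊂ Set.univ :=
      Set.ssubset_univ_iff.2 fun h =>
        L.loopless.irrefl x (h ▸ Set.mem_univ x : x ∈ L.neighborSet x)
    simpa using Set.ncard_lt_ncard h
  have hinc := hLdeg x
  have hratio := four_mul_edgeThreshold_le hk hn'
  have hkinc : edgeThreshold k (n' - 1) + k ≤ edgeThreshold k n' := by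
    have := edgeThreshold_succ (show k ≤ n' - 1 by omega)
    rw [show n' - 1 + 1 = n' by omega] at this
    omega
  have h23 : 2 * m ≤ 3 * (L.neighborSet x).ncard := by
    have h1 : n' * (edgeThreshold k n' - edgeThreshold k (n' - 1)) ≤
        n' * (L.neighborSet x).ncard := Nat.mul_le_mul_left _ (by omega)
    have h2 : n' * (2 * m) ≤ n' * (3 * (L.neighborSet x).ncard) := by nlinarith
    exact Nat.le_of_mul_le_mul_left h2 (by omega)
  refine ⟨m, (L.neighborSet x).ncard, L, hK.trans' hL, fun v => ?_, ⟨x, ?_⟩, ?_, by omega, hlt,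
    by omega⟩
  · rw [Nat.card_coe_set_eq]; exact hx v
  · rw [Nat.card_coe_set_eq]
  · have : (2 * m : ℝ) ≤ 3 * (L.neighborSet x).ncard := by exact_mod_cast h23
    linarith
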